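/- For integers k ≥ 2, c ≥ 3 and m, n ≥ k, the number of weak proper c-colourings of the (m,n) Candy Crush grid is at least (c/2)^{mn}; equivalently, the proportion ℓ of the c^{mn} colourings that are weak proper c-colourings satisfies ℓ ≥ 2^{−mn}. -/

import Mathlib

/-!
The hyperedges are forbidden one vertex at a time. Let `properUpTo t` be the set of colourings in
which no monochromatic hyperedge *ends* (at its right or bottom end) at one of the first `t`
vertices in lexicographic order. Then `properUpTo 0` consists of all `c ^ (m * n)` colourings,
`properUpTo (m * n)` is contained in `Y m n c k (m * n)`, and it suffices that each step keeps at
least half of the colourings (`card_step`).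

Let `v` be the vertex of index `t`. Whether `φ` lies in `properUpTo t` does not depend on `φ v`, and
at most two colours of `v` complete a monochromatic hyperedge: the common colour of the `k - 1`
vertices to its left, and that of the `k - 1` vertices above it. For `c ≥ 4` this already leaves half
of the colours. For `c = 3` the average number of excluded colours must be at most `3 / 2`, and
for this it is enough that at most half of the colourings in `properUpTo t` are *doubly blocked*,
i.e. have two distinct excluded colours at `v`. This is shown by an injection from doubly blocked
colourings to those that are not.

* If `k ≥ 3` (`two_mul_blocked_of_three_le`), recolour the left neighbour `l` of `v`, avoiding its old
  colour and the colour above it. The old colour is still visible two steps left of `v`.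
* If `k = 2` (`two_mul_blocked_two`), the colourings are proper colourings of a bipartite graph with
  three colours. Let `l`, `u`, `d` be the left, upper and upper-left neighbours of `v`; `φ` is doubly
  blocked when `φ l ≠ φ u`, and then these are the two colours other than `φ d`. Swap these two
  colours on the Kempe chain through `l`. A chain alternates colours along parity classes, and
  `l` and `u` have equal parity but distinct colours, so `u` is not on the chain; after the
  swap `l` and `u` agree. The swap is an involution.
-/

/-!
The (m,n) Candy Crush grid with parameter `k` has vertex set `Fin m × Fin n`
(0-indexed rows and columns). Its hyperedges are the sets of `k` vertices lying
consecutively in a single row (horizontal) or column (vertical). A `c`-colouring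
is a function `φ : Fin m × Fin n → Fin c`.
-/

/-- The horizontal hyperedge in row `i` whose lexicographically least vertex is `(i, j)`
(0-indexed) fits inside the grid and is monochromatic under `φ`. -/
def HorizMono (m n c k : ℕ) (φ : Fin m × Fin n → Fin c) (i : Fin m) (j : ℕ) : Prop :=
  j + k ≤ n ∧ ∀ b b' : Fin n, j ≤ (b : ℕ) → (b : ℕ) < j + k → j ≤ (b' : ℕ) → (b' : ℕ) < j + k →
    φ (i, b) = φ (i, b')

/-- The vertical hyperedge in column `j` whose lexicographically least vertex is `(i, j)`
(0-indexed) fits inside the grid and is monochromatic under `φ`. -/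
def VertMono (m n c k : ℕ) (φ : Fin m × Fin n → Fin c) (i : ℕ) (j : Fin n) : Prop :=
  i + k ≤ m ∧ ∀ a a' : Fin m, i ≤ (a : ℕ) → (a : ℕ) < i + k → i ≤ (a' : ℕ) → (a' : ℕ) < i + k →
    φ (a, j) = φ (a', j)

/-- The vertex `v` belongs to some monochromatic hyperedge of the Candy Crush grid
under the colouring `φ`. -/
def InMono (m n c k : ℕ) (φ : Fin m × Fin n → Fin c) (v : Fin m × Fin n) : Prop :=
  (∃ j, HorizMono m n c k φ v.1 j ∧ j ≤ (v.2 : ℕ) ∧ (v.2 : ℕ) < j + k) ∨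
  (∃ i, VertMono m n c k φ i v.2 ∧ i ≤ (v.1 : ℕ) ∧ (v.1 : ℕ) < i + k)

open Classical in
/-- `Y m n c k t` is the set of `c`-colourings of the `(m,n)` Candy Crush grid under which
none of the first `t` vertices in lexicographic order belongs to a monochromatic hyperedge.
The vertex `(i, j)` (0-indexed) has lexicographic index `i * n + j`, so the "first `t`
vertices" are those with index `< t`. -/
noncomputable def Y (m n c k t : ℕ) : Finset (Fin m × Fin n → Fin c) :=
  Finset.univ.filter fun φ => ∀ v : Fin m × Fin n, (v.1 : ℕ) * n + (v.2 : ℕ) < t →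
    ¬ InMono m n c k φ v

namespace CandyCrush

open Finset Function

variable {m n c k : ℕ}

/-- The position of a vertex in lexicographic order. -/
def idx (v : Fin m × Fin n) : ℕ := (v.1 : ℕ) * n + (v.2 : ℕ)

lemma idx_eq (v : Fin m × Fin n) : idx v = (finProdFinEquiv v : ℕ) := by
  simp [idx, finProdFinEquiv, mul_comm, add_comm]

lemma idx_inj {v w : Fin m × Fin n} (h : idx v = idx w) : v = w := by
  rw [idx_eq, idx_eq] at h
  exact finProdFinEquiv.injective (Fin.ext h)

lemma idx_lt (v : Fin m × Fin n) : idx v < m * n := by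
  rw [idx_eq]; exact (finProdFinEquiv v).2

lemma exists_idx {t : ℕ} (ht : t < m * n) : ∃ v : Fin m × Fin n, idx v = t :=
  ⟨finProdFinEquiv.symm ⟨t, ht⟩, by rw [idx_eq, Equiv.apply_symm_apply]⟩

lemma idx_row {i : Fin m} {b j : Fin n} (h : (b : ℕ) < j) : idx (i, b) < idx (i, j) := by
  simp only [idx]; omega

lemma idx_col {a i : Fin m} {b j : Fin n} (h : (a : ℕ) < i) : idx (a, b) < idx (i, j) := by
  have h1 : ((a : ℕ) + 1) * n ≤ i * n := Nat.mul_le_mul_right n h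
  have := b.2
  simp only [idx]; rw [add_mul] at h1; omega

/-- The `k - 1` vertices to the left of `v` exist and all have colour `x`, so that giving `v` the
colour `x` completes a monochromatic horizontal hyperedge. -/
def LeftBlock (k : ℕ) (φ : Fin m × Fin n → Fin c) (v : Fin m × Fin n) (x : Fin c) : Prop :=
  k ≤ (v.2 : ℕ) + 1 ∧ ∀ b : Fin n, (b : ℕ) < v.2 → (v.2 : ℕ) < b + k → φ (v.1, b) = x

/-- The `k - 1` vertices above `v` exist and all have colour `x`, so that giving `v` the
colour `x` completes a monochromatic vertical hyperedge. -/
def UpBlock (k : ℕ) (φ : Fin m × Fin n → Fin c) (v : Fin m × Fin n) (x : Fin c) : Prop :=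
  k ≤ (v.1 : ℕ) + 1 ∧ ∀ a : Fin m, (a : ℕ) < v.1 → (v.1 : ℕ) < a + k → φ (a, v.2) = x

/-- Colour `x` at `v` completes no monochromatic hyperedge whose last vertex is `v`. -/
def Free (k : ℕ) (φ : Fin m × Fin n → Fin c) (v : Fin m × Fin n) (x : Fin c) : Prop :=
  ¬ LeftBlock k φ v x ∧ ¬ UpBlock k φ v x

/-- Two distinct colours are excluded at `v`. -/
def Blocked (k : ℕ) (φ : Fin m × Fin n → Fin c) (v : Fin m × Fin n) : Prop :=
  ∃ x y, x ≠ y ∧ LeftBlock k φ v x ∧ UpBlock k φ v y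

lemma LeftBlock.congr {φ ψ : Fin m × Fin n → Fin c} {v : Fin m × Fin n} {x : Fin c}
    (h : ∀ w, idx w < idx v → φ w = ψ w) (hφ : LeftBlock k φ v x) : LeftBlock k ψ v x :=
  ⟨hφ.1, fun b hb hb' => by rw [← h _ (idx_row hb)]; exact hφ.2 b hb hb'⟩

lemma UpBlock.congr {φ ψ : Fin m × Fin n → Fin c} {v : Fin m × Fin n} {x : Fin c}
    (h : ∀ w, idx w < idx v → φ w = ψ w) (hφ : UpBlock k φ v x) : UpBlock k ψ v x :=
  ⟨hφ.1, fun b hb hb' => by rw [← h _ (idx_col hb)]; exact hφ.2 b hb hb'⟩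

lemma Free.congr {φ ψ : Fin m × Fin n → Fin c} {v : Fin m × Fin n} {x : Fin c}
    (h : ∀ w, idx w < idx v → φ w = ψ w) (hφ : Free k φ v x) : Free k ψ v x :=
  ⟨fun h' => hφ.1 (h'.congr fun w hw => (h w hw).symm),
    fun h' => hφ.2 (h'.congr fun w hw => (h w hw).symm)⟩

lemma LeftBlock.unique (hk : 2 ≤ k) {φ : Fin m × Fin n → Fin c} {v : Fin m × Fin n} {x y : Fin c}
    (hx : LeftBlock k φ v x) (hy : LeftBlock k φ v y) : x = y := by
  have h1 := hx.1
  have h2 := v.2.2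
  let b : Fin n := ⟨v.2 - 1, by omega⟩
  have hb : (b : ℕ) < v.2 := by simp only [b]; omega
  have hb' : (v.2 : ℕ) < b + k := by simp only [b]; omega
  rw [← hx.2 b hb hb', ← hy.2 b hb hb']

lemma UpBlock.unique (hk : 2 ≤ k) {φ : Fin m × Fin n → Fin c} {v : Fin m × Fin n} {x y : Fin c}
    (hx : UpBlock k φ v x) (hy : UpBlock k φ v y) : x = y := by
  have h1 := hx.1
  have h2 := v.1.2
  let b : Fin m := ⟨v.1 - 1, by omega⟩
  have hb : (b : ℕ) < v.1 := by simp only [b]; omega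
  have hb' : (v.1 : ℕ) < b + k := by simp only [b]; omega
  rw [← hx.2 b hb hb', ← hy.2 b hb hb']

open Classical in
/-- The colourings in which no monochromatic hyperedge has its last vertex among the first `t`
vertices. -/
noncomputable def properUpTo (m n c k t : ℕ) : Finset (Fin m × Fin n → Fin c) :=
  univ.filter fun φ => ∀ v, idx v < t → Free k φ v (φ v)

lemma mem_properUpTo {t : ℕ} {φ : Fin m × Fin n → Fin c} :
    φ ∈ properUpTo m n c k t ↔ ∀ v, idx v < t → Free k φ v (φ v) := by
  simp [properUpTo]

lemma properUpTo_congr {t : ℕ} {φ ψ : Fin m × Fin n → Fin c}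
    (h : ∀ w, idx w < t → φ w = ψ w) (hφ : φ ∈ properUpTo m n c k t) :
    ψ ∈ properUpTo m n c k t := by
  rw [mem_properUpTo] at *
  intro v hv
  rw [← h v hv]
  exact (hφ v hv).congr fun w hw => h w (hw.trans hv)

lemma mem_properUpTo_succ {v : Fin m × Fin n} {φ : Fin m × Fin n → Fin c} :
    φ ∈ properUpTo m n c k (idx v + 1) ↔ φ ∈ properUpTo m n c k (idx v) ∧ Free k φ v (φ v) := by
  simp only [mem_properUpTo]
  constructor
  · exact fun h => ⟨fun w hw => h w (by omega), h v (by omega)⟩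
  · rintro ⟨h1, h2⟩ w hw
    rcases Nat.lt_succ_iff_lt_or_eq.1 hw with h | h
    · exact h1 w h
    · rw [idx_inj h]; exact h2

/-- A monochromatic hyperedge has a last vertex, so a colouring that passes all vertices has no
monochromatic hyperedge. -/
lemma properUpTo_subset_Y (hk : 2 ≤ k) : properUpTo m n c k (m * n) ⊆ Y m n c k (m * n) := by
  intro φ hφ
  rw [mem_properUpTo] at hφ
  simp only [Y, mem_filter, mem_univ, true_and]
  rintro v - (⟨j, ⟨h1, h2⟩, h3, h4⟩ | ⟨i, ⟨h1, h2⟩, h3, h4⟩)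
  · refine (hφ (v.1, ⟨j + k - 1, by omega⟩) (idx_lt _)).1 ⟨by simp only; omega, ?_⟩
    intro b hb hb'
    simp only at hb hb' ⊢
    exact h2 _ _ (by omega) (by omega) (by simp only; omega) (by simp only; omega)
  · refine (hφ (⟨i + k - 1, by omega⟩, v.2) (idx_lt _)).2 ⟨by simp only; omega, ?_⟩
    intro b hb hb'
    simp only at hb hb' ⊢
    exact h2 _ _ (by omega) (by omega) (by simp only; omega) (by simp only; omega)

/-! ### At most half of the colourings are doubly blocked -/

open Classical in
/-- The colourings in `properUpTo (idx v)` that exclude two colours at `v`. -/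
noncomputable def blockedSet (k c : ℕ) (v : Fin m × Fin n) : Finset (Fin m × Fin n → Fin c) :=
  (properUpTo m n c k (idx v)).filter fun φ => Blocked k φ v

lemma mem_blockedSet {v : Fin m × Fin n} {φ : Fin m × Fin n → Fin c} :
    φ ∈ blockedSet k c v ↔ φ ∈ properUpTo m n c k (idx v) ∧ Blocked k φ v := by
  simp [blockedSet]

/-- An injection from the doubly blocked colourings into the others bounds their number. -/
lemma two_mul_blocked_of_inj {v : Fin m × Fin n}
    (f : (Fin m × Fin n → Fin c) → (Fin m × Fin n → Fin c))
    (hf : ∀ φ ∈ blockedSet k c v, f φ ∈ properUpTo m n c k (idx v) ∧ ¬ Blocked k (f φ) v)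
    (hinj : Set.InjOn f (blockedSet k c v : Set (Fin m × Fin n → Fin c))) :
    2 * #(blockedSet k c v) ≤ #(properUpTo m n c k (idx v)) := by
  classical
  have h : #(blockedSet k c v) ≤
      #((properUpTo m n c k (idx v)).filter fun φ => ¬ Blocked k φ v) :=
    card_le_card_of_injOn f (fun φ hφ => by
      simpa using hf φ hφ) hinj
  have h' := card_filter_add_card_filter_not (s := properUpTo m n c k (idx v))
    (fun φ => Blocked k φ v)
  have h'' : #(blockedSet k c v) = #((properUpTo m n c k (idx v)).filter fun φ => Blocked k φ v) := by
    congr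
  omega

lemma two_mul_blocked_of_three_le (hk : 3 ≤ k) (hc : 3 ≤ c) (v : Fin m × Fin n) :
    2 * #(blockedSet k c v) ≤ #(properUpTo m n c k (idx v)) := by
  classical
  rcases (blockedSet k c v).eq_empty_or_nonempty with h0 | ⟨φ₀, h₀⟩
  · simp [h0]
  -- `i ≥ k - 1` and `j ≥ k - 1` hold as soon as some colouring is doubly blocked at `(i, j)`
  obtain ⟨-, x₀, y₀, -, ⟨hj, -⟩, hi, -⟩ := mem_blockedSet.1 h₀
  obtain ⟨i, j⟩ := v
  simp only at hi hj
  have hil := i.2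
  have hjl := j.2
  let p : Fin n := ⟨j - 1, by omega⟩
  let q : Fin n := ⟨j - 2, by omega⟩
  let o : Fin m := ⟨i - 1, by omega⟩
  have hp : (p : ℕ) = j - 1 := rfl
  have hq : (q : ℕ) = j - 2 := rfl
  have ho : (o : ℕ) = i - 1 := rfl
  have hpq : (i, q) ≠ (i, p) := by
    intro h
    have := congrArg (fun w : Fin m × Fin n => (w.2 : ℕ)) h
    simp only at this; omega
  have hz : ∀ φ : Fin m × Fin n → Fin c, ∃ z, z ≠ φ (i, p) ∧ z ≠ φ (o, p) := by
    intro φ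
    have : #({φ (i, p), φ (o, p)} : Finset (Fin c)) < #(univ : Finset (Fin c)) := by
      have := card_le_two (a := φ (i, p)) (b := φ (o, p))
      simp only [card_univ, Fintype.card_fin]; omega
    obtain ⟨z, -, hz⟩ := exists_mem_notMem_of_card_lt_card this
    simp only [mem_insert, mem_singleton, not_or] at hz
    exact ⟨z, hz⟩
  choose z hz1 hz2 using hz
  have hlr : ∀ (φ : Fin m × Fin n → Fin c) x, LeftBlock k φ (i, j) x →
      φ (i, p) = x ∧ φ (i, q) = x := fun φ x h =>
    ⟨h.2 p (by simp only; omega) (by simp only; omega),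
      h.2 q (by simp only; omega) (by simp only; omega)⟩
  refine two_mul_blocked_of_inj (fun φ => update φ (i, p) (z φ)) ?_ ?_
  · intro φ hφ
    obtain ⟨hφ, x, y, -, hx, -⟩ := mem_blockedSet.1 hφ
    obtain ⟨hxp, hxq⟩ := hlr φ x hx
    constructor
    · rw [mem_properUpTo] at hφ ⊢
      intro w hw
      by_cases hwl : w = (i, p)
      · subst hwl
        simp only [update_self]
        refine ⟨fun h => ?_, fun h => ?_⟩
        · -- the second vertex to the left of `v` still carries the old colour
          have := h.2 q (by simp only; omega) (by simp only; omega)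
          simp only [update_of_ne hpq] at this
          exact hz1 φ (by rw [← this, hxp, hxq])
        · have := h.2 o (by simp only; omega) (by simp only; omega)
          rw [update_of_ne] at this
          · exact hz2 φ this.symm
          · intro h
            have := congrArg (fun w : Fin m × Fin n => (w.1 : ℕ)) h
            simp only at this; omega
      · rw [update_of_ne hwl]
        refine (hφ w hw).congr fun w' hw' => ?_
        rw [update_of_ne]
        -- no vertex lies strictly between `(i, p)` and `v`
        rintro rfl
        simp only [idx] at hw hw'
        omega
    · rintro ⟨x', y', -, hx', -⟩
      obtain ⟨h1, h2⟩ := hlr _ x' hx'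
      simp only [update_self, update_of_ne hpq] at h1 h2
      exact hz1 φ (by rw [h1, ← h2, hxp, hxq])
  · intro φ hφ ψ hψ h
    obtain ⟨-, x, -, -, hx, -⟩ := mem_blockedSet.1 hφ
    obtain ⟨-, x', -, -, hx', -⟩ := mem_blockedSet.1 hψ
    obtain ⟨h1, h2⟩ := hlr φ x hx
    obtain ⟨h3, h4⟩ := hlr ψ x' hx'
    funext w
    by_cases hw : w = (i, p)
    · have := congrFun h (i, q)
      simp only [update_of_ne hpq] at this
      rw [hw, h1, ← h2, this, h4, h3]
    · have := congrFun h w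
      simpa only [update_of_ne hw] using this

/-! ### Kempe chains for `k = 2` and three colours -/

/-- Two grid vertices at distance one. -/
def GridAdj (v w : Fin m × Fin n) : Prop :=
  (v.1 = w.1 ∧ ((v.2 : ℕ) + 1 = w.2 ∨ (w.2 : ℕ) + 1 = v.2)) ∨
  (v.2 = w.2 ∧ ((v.1 : ℕ) + 1 = w.1 ∨ (w.1 : ℕ) + 1 = v.1))

lemma GridAdj.symm {v w : Fin m × Fin n} (h : GridAdj v w) : GridAdj w v := by
  rcases h with ⟨h, h'⟩ | ⟨h, h'⟩
  · exact Or.inl ⟨h.symm, h'.symm⟩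
  · exact Or.inr ⟨h.symm, h'.symm⟩

lemma mem_properUpTo_two {t : ℕ} {φ : Fin m × Fin n → Fin c} :
    φ ∈ properUpTo m n c 2 t ↔
      ∀ v w, GridAdj v w → idx v < t → idx w < t → φ v ≠ φ w := by
  rw [mem_properUpTo]
  constructor
  · have key : ∀ (h : ∀ v, idx v < t → Free 2 φ v (φ v)) (v w : Fin m × Fin n),
        idx w < t → (v.1 = w.1 ∧ (v.2 : ℕ) + 1 = w.2) ∨ (v.2 = w.2 ∧ (v.1 : ℕ) + 1 = w.1) →
        φ v ≠ φ w := by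
      rintro h ⟨a, b⟩ ⟨a', b'⟩ hw (⟨h1, h2⟩ | ⟨h1, h2⟩) heq
      · simp only at h1 h2
        subst h1
        refine (h _ hw).1 ⟨by simp only; omega, fun e he he' => ?_⟩
        simp only at he he' ⊢
        rw [show e = b from Fin.ext (by omega)]; exact heq
      · simp only at h1 h2
        subst h1
        refine (h _ hw).2 ⟨by simp only; omega, fun e he he' => ?_⟩
        simp only at he he' ⊢
        rw [show e = a from Fin.ext (by omega)]; exact heq
    rintro h v w (⟨h1, h2 | h2⟩ | ⟨h1, h2 | h2⟩) hv hw
    · exact key h v w hw (Or.inl ⟨h1, h2⟩)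
    · exact (key h w v hv (Or.inl ⟨h1.symm, h2⟩)).symm
    · exact key h v w hw (Or.inr ⟨h1, h2⟩)
    · exact (key h w v hv (Or.inr ⟨h1.symm, h2⟩)).symm
  · rintro h ⟨a, b⟩ hv
    have ha := a.2
    have hb := b.2
    refine ⟨fun hl => ?_, fun hu => ?_⟩
    · have h1 := hl.1
      simp only at h1
      let e : Fin n := ⟨b - 1, by omega⟩
      have he : (e : ℕ) = b - 1 := rfl
      have hlt : (e : ℕ) < b := by omega
      exact h (a, e) (a, b) (Or.inl ⟨rfl, Or.inl (by simp only; omega)⟩)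
        ((idx_row hlt).trans hv) hv (hl.2 e hlt (by simp only; omega))
    · have h1 := hu.1
      simp only at h1
      let e : Fin m := ⟨a - 1, by omega⟩
      have he : (e : ℕ) = a - 1 := rfl
      have hlt : (e : ℕ) < a := by omega
      exact h (e, b) (a, b) (Or.inr ⟨rfl, Or.inl (by simp only; omega)⟩)
        ((idx_col hlt).trans hv) hv (hu.2 e hlt (by simp only; omega))

/-- Adjacency among the first `t` vertices whose colour is not the colour of `d`. -/
def ChainAdj (t : ℕ) (d : Fin m × Fin n) (φ : Fin m × Fin n → Fin 3) (v w : Fin m × Fin n) :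
    Prop :=
  GridAdj v w ∧ idx v < t ∧ idx w < t ∧ φ v ≠ φ d ∧ φ w ≠ φ d

/-- The Kempe chain of `l`: the vertices joined to `l` by a path avoiding the colour of `d`. -/
def Chain (t : ℕ) (d l : Fin m × Fin n) (φ : Fin m × Fin n → Fin 3) (w : Fin m × Fin n) : Prop :=
  Relation.ReflTransGen (ChainAdj t d φ) l w

/-- The transposition of `Fin 3` fixing `p`, written as the reflection `q ↦ 2 p - q` modulo `3`. -/
def swapOther (p q : Fin 3) : Fin 3 := 2 * p - q

lemma swapOther_swapOther : ∀ p q, swapOther p (swapOther p q) = q := by decide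

lemma swapOther_eq_iff : ∀ p q, swapOther p q = p ↔ q = p := by decide

lemma swapOther_inj : ∀ p q r, swapOther p q = swapOther p r → q = r := by decide

lemma swapOther_eq_other : ∀ p q r, q ≠ p → r ≠ p → q ≠ r → swapOther p q = r := by decide

lemma eq_iff_of_ne : ∀ p q r s : Fin 3, q ≠ p → r ≠ p → s ≠ p → q ≠ r → (r = s ↔ q ≠ s) := by
  omega

open Classical in
/-- Swap the two colours other than `φ d` on the Kempe chain of `l`. -/
noncomputable def kempe (t : ℕ) (d l : Fin m × Fin n) (φ : Fin m × Fin n → Fin 3) :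
    Fin m × Fin n → Fin 3 :=
  fun w => if Chain t d l φ w then swapOther (φ d) (φ w) else φ w

section Kempe

variable {t : ℕ} {d l : Fin m × Fin n} {φ : Fin m × Fin n → Fin 3}

lemma kempe_of_chain {w : Fin m × Fin n} (h : Chain t d l φ w) :
    kempe t d l φ w = swapOther (φ d) (φ w) := if_pos h

lemma kempe_of_not_chain {w : Fin m × Fin n} (h : ¬ Chain t d l φ w) :
    kempe t d l φ w = φ w := if_neg h

lemma Chain.ne (hl : φ l ≠ φ d) {w : Fin m × Fin n} (h : Chain t d l φ w) : φ w ≠ φ d := by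
  cases h with
  | refl => exact hl
  | tail _ h => exact h.2.2.2.2

lemma kempe_eq_iff (w : Fin m × Fin n) : kempe t d l φ w = φ d ↔ φ w = φ d := by
  by_cases h : Chain t d l φ w
  · rw [kempe_of_chain h, swapOther_eq_iff]
  · rw [kempe_of_not_chain h]

lemma kempe_base : kempe t d l φ d = φ d := (kempe_eq_iff d).2 rfl

/-- The swap moves no vertex into or out of the colour class of `d`, so it preserves chains. -/
lemma chain_kempe : Chain t d l (kempe t d l φ) = Chain t d l φ := by
  have : ChainAdj t d (kempe t d l φ) = ChainAdj t d φ := by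
    funext v w
    simp only [ChainAdj, kempe_base, ne_eq, kempe_eq_iff]
  unfold Chain
  rw [this]

lemma kempe_kempe : kempe t d l (kempe t d l φ) = φ := by
  funext w
  by_cases h : Chain t d l φ w
  · rw [kempe_of_chain (by rwa [chain_kempe]), kempe_base, kempe_of_chain h, swapOther_swapOther]
  · rw [kempe_of_not_chain (by rwa [chain_kempe]), kempe_of_not_chain h]

lemma kempe_mem (hl : φ l ≠ φ d) (hφ : φ ∈ properUpTo m n 3 2 t) :
    kempe t d l φ ∈ properUpTo m n 3 2 t := by
  rw [mem_properUpTo_two] at hφ ⊢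
  -- on the boundary of the chain the outer vertex has the colour of `d`
  have key : ∀ v w, GridAdj v w → idx v < t → idx w < t → Chain t d l φ v → ¬ Chain t d l φ w →
      kempe t d l φ v ≠ kempe t d l φ w := by
    intro v w hvw hv hw hcv hcw
    have hwd : φ w = φ d := by
      by_contra hne
      exact hcw (Relation.ReflTransGen.tail hcv ⟨hvw, hv, hw, hcv.ne hl, hne⟩)
    rw [kempe_of_not_chain hcw, hwd]
    exact fun h => hcv.ne hl ((kempe_eq_iff v).1 h)
  intro v w hvw hv hw
  by_cases hcv : Chain t d l φ v <;> by_cases hcw : Chain t d l φ w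
  · rw [kempe_of_chain hcv, kempe_of_chain hcw]
    exact fun h => hφ v w hvw hv hw (swapOther_inj _ _ _ h)
  · exact key v w hvw hv hw hcv hcw
  · exact (key w v hvw.symm hw hv hcw hcv).symm
  · rw [kempe_of_not_chain hcv, kempe_of_not_chain hcw]
    exact hφ v w hvw hv hw

/-- Colours alternate along a Kempe chain, so they are determined by parity. -/
lemma Chain.parity (hl : φ l ≠ φ d) (hφ : φ ∈ properUpTo m n 3 2 t) {w : Fin m × Fin n}
    (h : Chain t d l φ w) :
    φ w = φ l ↔ ((w.1 : ℕ) + w.2) % 2 = ((l.1 : ℕ) + l.2) % 2 := by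
  rw [mem_properUpTo_two] at hφ
  induction h with
  | refl => simp
  | @tail v w _ hvw ih =>
    obtain ⟨hadj, hv, hw, hvd, hwd⟩ := hvw
    rw [eq_iff_of_ne _ _ _ _ hvd hwd hl (hφ v w hadj hv hw), ne_eq, ih]
    rcases hadj with ⟨h1, h2⟩ | ⟨h1, h2⟩ <;> have := congrArg Fin.val h1 <;> omega

end Kempe

lemma two_mul_blocked_two (v : Fin m × Fin n) :
    2 * #(blockedSet 2 3 v) ≤ #(properUpTo m n 3 2 (idx v)) := by
  classical
  rcases (blockedSet 2 3 v).eq_empty_or_nonempty with h0 | ⟨φ₀, h₀⟩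
  · simp [h0]
  obtain ⟨-, x₀, y₀, -, ⟨hj, -⟩, hi, -⟩ := mem_blockedSet.1 h₀
  obtain ⟨i, j⟩ := v
  simp only at hi hj
  have hil := i.2
  have hjl := j.2
  let p : Fin n := ⟨j - 1, by omega⟩
  let o : Fin m := ⟨i - 1, by omega⟩
  have hp : (p : ℕ) = j - 1 := rfl
  have ho : (o : ℕ) = i - 1 := rfl
  have hlt : idx (i, p) < idx (i, j) := idx_row (by omega)
  have hut : idx (o, j) < idx (i, j) := idx_col (by omega)
  have hdt : idx (o, p) < idx (i, j) := idx_col (by omega)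
  have hblock : ∀ φ : Fin m × Fin n → Fin 3, Blocked 2 φ (i, j) → φ (i, p) ≠ φ (o, j) := by
    rintro φ ⟨x, y, hxy, hx, hy⟩
    have h1 := hx.2 p (by simp only; omega) (by simp only; omega)
    have h2 := hy.2 o (by simp only; omega) (by simp only; omega)
    simp only at h1 h2
    rwa [h1, h2]
  refine two_mul_blocked_of_inj (kempe (idx (i, j)) (o, p) (i, p)) ?_ ?_
  · intro φ hφ
    obtain ⟨hφ, hb⟩ := mem_blockedSet.1 hφ
    have hne := hblock φ hb
    have hprop := mem_properUpTo_two.1 hφ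
    have hl : φ (i, p) ≠ φ (o, p) :=
      hprop _ _ (Or.inr ⟨rfl, Or.inr (by simp only; omega)⟩) hlt hdt
    have hu : φ (o, j) ≠ φ (o, p) :=
      hprop _ _ (Or.inl ⟨rfl, Or.inr (by simp only; omega)⟩) hut hdt
    refine ⟨kempe_mem hl hφ, fun hb' => hblock _ hb' ?_⟩
    have hnc : ¬ Chain (idx (i, j)) (o, p) (i, p) φ (o, j) := fun hc =>
      hne ((hc.parity hl hφ).2 (by simp only; omega)).symm
    rw [kempe_of_not_chain hnc, kempe_of_chain Relation.ReflTransGen.refl]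
    exact swapOther_eq_other _ _ _ hl hu hne
  · exact (fun φ _ ψ _ h => by
      rw [← kempe_kempe (t := idx (i, j)) (d := (o, p)) (l := (i, p)) (φ := φ), h, kempe_kempe])

/-! ### One step keeps half of the colourings -/

open Classical in
/-- The number of excluded colours at `v` is at most `2`, and at most `1` unless `φ` is doubly
blocked. -/
lemma card_not_free_le (hk : 2 ≤ k) (φ : Fin m × Fin n → Fin c) (v : Fin m × Fin n) :
    #(univ.filter fun x => ¬ Free k φ v x) ≤ 1 + if Blocked k φ v then 1 else 0 := by
  have hL : #(univ.filter fun x => LeftBlock k φ v x) ≤ 1 :=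
    card_le_one.2 fun x hx y hy => (mem_filter.1 hx).2.unique hk (mem_filter.1 hy).2
  have hU : #(univ.filter fun x => UpBlock k φ v x) ≤ 1 :=
    card_le_one.2 fun x hx y hy => (mem_filter.1 hx).2.unique hk (mem_filter.1 hy).2
  have hiff : ∀ x, ¬ Free k φ v x ↔ LeftBlock k φ v x ∨ UpBlock k φ v x := by
    intro x; unfold Free; tauto
  split_ifs with hb
  · have hsub : (univ.filter fun x => ¬ Free k φ v x) ⊆
        (univ.filter fun x => LeftBlock k φ v x) ∪ (univ.filter fun x => UpBlock k φ v x) := by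
      intro x hx
      simpa [hiff] using hx
    exact (card_le_card hsub).trans ((card_union_le _ _).trans (by omega))
  · rw [add_zero, card_le_one]
    simp only [mem_filter, mem_univ, true_and, hiff]
    rintro x (hx | hx) y (hy | hy)
    · exact hx.unique hk hy
    · by_contra h
      exact hb ⟨x, y, h, hx, hy⟩
    · by_contra h
      exact hb ⟨y, x, fun h' => h h'.symm, hy, hx⟩
    · exact hx.unique hk hy

open Classical in
/-- Double counting: recolouring `v` shows that the colourings in which `v` has an excluded colour
number at most `1 / c` times the total number of excluded colours. -/
lemma mul_card_bad (v : Fin m × Fin n) :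
    c * #((properUpTo m n c k (idx v)).filter fun φ => ¬ Free k φ v (φ v)) ≤
      ∑ φ ∈ properUpTo m n c k (idx v), #(univ.filter fun x => ¬ Free k φ v x) := by
  have hmul : c * #((properUpTo m n c k (idx v)).filter fun φ => ¬ Free k φ v (φ v)) =
      #(((properUpTo m n c k (idx v)).filter fun φ => ¬ Free k φ v (φ v)) ×ˢ
        (univ : Finset (Fin c))) := by
    rw [card_product, card_univ, Fintype.card_fin, mul_comm]
  rw [hmul, ← card_sigma]
  have hupd : ∀ (φ : Fin m × Fin n → Fin c) (y : Fin c) w, idx w < idx v →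
      φ w = update φ v y w := by
    intro φ y w hw
    rw [update_of_ne]
    rintro rfl
    exact lt_irrefl _ hw
  refine card_le_card_of_injOn (fun a => ⟨update a.1 v a.2, a.1 v⟩) ?_ ?_
  · rintro ⟨φ, y⟩ h
    simp only [coe_product, Set.mem_prod, mem_coe, mem_filter, coe_univ, Set.mem_univ, and_true] at h
    simp only [coe_sigma, Set.mem_sigma_iff, mem_coe, mem_filter, mem_univ, true_and]
    exact ⟨properUpTo_congr (hupd φ y) h.1,
      fun hf => h.2 (hf.congr fun w hw => (hupd φ y w hw).symm)⟩
  · rintro ⟨φ, y⟩ - ⟨ψ, z⟩ - h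
    simp only [Sigma.mk.injEq, heq_eq_eq] at h
    obtain ⟨h1, h2⟩ := h
    have hy : y = z := by simpa using congrFun h1 v
    have : φ = ψ := by
      funext w
      by_cases hw : w = v
      · rw [hw, h2]
      · simpa [update_of_ne hw] using congrFun h1 w
    rw [hy, this]

lemma card_step (hk : 2 ≤ k) (hc : 3 ≤ c) (v : Fin m × Fin n) :
    #(properUpTo m n c k (idx v)) ≤ 2 * #(properUpTo m n c k (idx v + 1)) := by
  classical
  have hsplit := card_filter_add_card_filter_not (s := properUpTo m n c k (idx v))
    (fun φ => Free k φ v (φ v))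
  have hsucc : (properUpTo m n c k (idx v)).filter (fun φ => Free k φ v (φ v)) =
      properUpTo m n c k (idx v + 1) := by
    ext φ
    rw [mem_properUpTo_succ, mem_filter]
  rw [hsucc] at hsplit
  have hsum : ∑ φ ∈ properUpTo m n c k (idx v), #(univ.filter fun x => ¬ Free k φ v x) ≤
      #(properUpTo m n c k (idx v)) + #(blockedSet k c v) := by
    refine (sum_le_sum fun φ _ => card_not_free_le hk φ v).trans (le_of_eq ?_)
    rw [sum_add_distrib, sum_const, smul_eq_mul, mul_one, ← card_filter]
    congr
  have hbad := (mul_card_bad (k := k) (c := c) v).trans hsum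
  have hle : #(blockedSet k c v) ≤ #(properUpTo m n c k (idx v)) := card_filter_le _ _
  rcases Nat.lt_or_ge c 4 with h | h
  · obtain rfl : c = 3 := by omega
    have hhalf : 2 * #(blockedSet k 3 v) ≤ #(properUpTo m n 3 k (idx v)) := by
      rcases Nat.lt_or_ge k 3 with h' | h'
      · obtain rfl : k = 2 := by omega
        exact two_mul_blocked_two v
      · exact two_mul_blocked_of_three_le h' le_rfl v
    omega
  · have := (Nat.mul_le_mul_right _ h).trans hbad
    omega

lemma card_properUpTo (hk : 2 ≤ k) (hc : 3 ≤ c) {t : ℕ} (ht : t ≤ m * n) :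
    c ^ (m * n) ≤ 2 ^ t * #(properUpTo m n c k t) := by
  induction t with
  | zero =>
    have : properUpTo m n c k 0 = univ := by
      ext φ; simp [mem_properUpTo]
    simp [this]
  | succ t ih =>
    obtain ⟨v, rfl⟩ := exists_idx (show t < m * n by omega)
    calc c ^ (m * n) ≤ 2 ^ idx v * #(properUpTo m n c k (idx v)) := ih (by omega)
      _ ≤ 2 ^ idx v * (2 * #(properUpTo m n c k (idx v + 1))) :=
        Nat.mul_le_mul_left _ (card_step hk hc v)
      _ = 2 ^ (idx v + 1) * #(properUpTo m n c k (idx v + 1)) := by ring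

end CandyCrush

/-- For `k ≥ 2`, `c ≥ 3` and `m, n ≥ k`, the number of weak proper
`c`-colourings of the `(m,n)` Candy Crush grid (i.e. `|Y_{mn}|`) is at least `(c/2)^{mn}`;
equivalently, the proportion `ℓ = |Y_{mn}| / c^{mn}` satisfies `ℓ ≥ 2^{-mn}`. -/
theorem stmt11 (m n c k : ℕ) (hk : 2 ≤ k) (hc : 3 ≤ c) (hm : k ≤ m) (hn : k ≤ n) :
    ((c : ℚ) / 2) ^ (m * n) ≤ ((Y m n c k (m * n)).card : ℚ) ∧
    (1 : ℚ) / 2 ^ (m * n) ≤ ((Y m n c k (m * n)).card : ℚ) / (c : ℚ) ^ (m * n) := by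
  have hmain : c ^ (m * n) ≤ 2 ^ (m * n) * (Y m n c k (m * n)).card :=
    (CandyCrush.card_properUpTo hk hc le_rfl).trans
      (Nat.mul_le_mul_left _ (Finset.card_le_card (CandyCrush.properUpTo_subset_Y hk)))
  have hq : (c : ℚ) ^ (m * n) ≤ 2 ^ (m * n) * ((Y m n c k (m * n)).card : ℚ) := by
    exact_mod_cast hmain
  have hc0 : (0 : ℚ) < (c : ℚ) ^ (m * n) := by
    have : 0 < c := by omega
    positivity
  constructor
  · rw [div_pow, div_le_iff₀ (by positivity), mul_comm (Nat.cast _)]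
    exact hq
  · rw [div_le_div_iff₀ (by positivity) hc0, one_mul, mul_comm (Nat.cast _)]
    exact hq
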